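/- Let m ∈ ℝ and t ∈ [0,1]. For j, k ∈ ℤ set f^t_{jk} := f(tj + (1-t)k), and for a ∈ S^m_f(ℝ^{2n}) define a^t_{jk}(q, p, q') := ψ_j(r) ψ_k(r') a( tr + (1-t)r', (f^t_{jk})^{-1}(tθ + (1-t)θ'), ρ, f^t_{jk} η ), for q = (r,θ), q' = (r',θ'), p = (ρ,η). Then for all multiindices α, β, γ ∈ ℕⁿ there exist C > 0 and N' ∈ ℕ such that |∂_q^α ∂_p^β ∂_{q'}^γ a^t_{jk}(q, p, q')| ≤ C |a|_{S^m_f, N'} ⟨p⟩^{m - |β|} for all (q, p, q') ∈ ℝ^{3n}, all j, k ∈ ℤ, all t ∈ [0,1] and all a ∈ S^m_f(ℝ^{2n}). -/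

import Mathlib

open MeasureTheory Finset

noncomputable section

/-- Points of `ℝⁿ` (with `n = d + 1`) split as `q = (r, θ) ∈ ℝ × ℝ^d`. -/
abbrev Q (d : ℕ) : Type := ℝ × (Fin d → ℝ)

/-- The coordinate direction `∂_r`. -/
def eR (d : ℕ) : Q d := ((1 : ℝ), 0)

/-- The coordinate direction `∂_{θ_i}`. -/
def eTh (d : ℕ) (i : Fin d) : Q d := ((0 : ℝ), Pi.single i 1)

/-- Directional derivative of a complex-valued function. -/
def dirD {E : Type*} [NormedAddCommGroup E] [NormedSpace ℝ E]
    (v : E) (g : E → ℂ) : E → ℂ :=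
  fun x => fderiv ℝ g x v

/-- Multiindices `α = (α₀, α')` split as in the paper. -/
abbrev MIdx (d : ℕ) : Type := ℕ × (Fin d → ℕ)

/-- `|α| = α₀ + |α'|`. -/
def deg {d : ℕ} (α : MIdx d) : ℕ := α.1 + ∑ i, α.2 i

/-- `|α'|`, the angular part of a multiindex. -/
def degA {d : ℕ} (α : MIdx d) : ℕ := ∑ i, α.2 i

/-- `∂_q^α` acting on functions on `ℝⁿ = ℝ × ℝ^d`. -/
def mderiv1 {d : ℕ} (α : MIdx d) (g : Q d → ℂ) : Q d → ℂ :=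
  (dirD (eR d))^[α.1] <|
    (List.finRange d).foldr (fun i h => (dirD (eTh d i))^[α.2 i] h) g

/-- `∂_q^α ∂_p^β` acting on functions on phase space. -/
def mderiv2 {d : ℕ} (α β : MIdx d) (g : Q d × Q d → ℂ) : Q d × Q d → ℂ :=
  (dirD ((eR d, 0) : Q d × Q d))^[α.1] <|
  (List.finRange d).foldr (fun i h => (dirD ((eTh d i, 0) : Q d × Q d))^[α.2 i] h) <|
  (dirD (((0 : Q d), eR d) : Q d × Q d))^[β.1] <|
  (List.finRange d).foldr (fun i h => (dirD (((0 : Q d), eTh d i) : Q d × Q d))^[β.2 i] h) g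

/-- `∂_q^α ∂_p^β ∂_{q'}^γ` acting on amplitudes `a(q, p, q')`. -/
def mderiv3 {d : ℕ} (α β γ : MIdx d) (g : Q d × Q d × Q d → ℂ) : Q d × Q d × Q d → ℂ :=
  (dirD ((eR d, 0, 0) : Q d × Q d × Q d))^[α.1] <|
  (List.finRange d).foldr (fun i h => (dirD ((eTh d i, 0, 0) : Q d × Q d × Q d))^[α.2 i] h) <|
  (dirD (((0 : Q d), eR d, 0) : Q d × Q d × Q d))^[β.1] <|
  (List.finRange d).foldr (fun i h => (dirD (((0 : Q d), eTh d i, 0) : Q d × Q d × Q d))^[β.2 i] h) <|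
  (dirD (((0 : Q d), (0 : Q d), eR d) : Q d × Q d × Q d))^[γ.1] <|
  (List.finRange d).foldr (fun i h => (dirD (((0 : Q d), (0 : Q d), eTh d i) : Q d × Q d × Q d))^[γ.2 i] h) g

/-- `⟨p⟩ = (1 + ρ² + |η|²)^{1/2}`. -/
def brP {d : ℕ} (p : Q d) : ℝ := Real.sqrt (1 + p.1 ^ 2 + ∑ i, (p.2 i) ^ 2)

/-- `⟨ρ ⊕ f(r)⁻¹ η⟩` evaluated at a phase-space point. -/
def brF {d : ℕ} (f : ℝ → ℝ) (x : Q d × Q d) : ℝ :=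
  Real.sqrt (1 + x.2.1 ^ 2 + ∑ i, (x.2.2 i / f x.1.1) ^ 2)

/-- The standing assumption on `f : ℝ → [1, ∞)`: smooth, `f ≥ 1`, and all derivatives
of `log f` of order `≥ 1` are bounded. -/
def GoodF (f : ℝ → ℝ) : Prop :=
  ContDiff ℝ (⊤ : ℕ∞) f ∧ (∀ r, 1 ≤ f r) ∧
    ∀ j : ℕ, 1 ≤ j → ∃ C : ℝ, ∀ r, |iteratedDeriv j (fun s => Real.log (f s)) r| ≤ C

/-- Membership in the symbol class `S^m_f(ℝ^{2n})`. -/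
def IsSymbol {d : ℕ} (f : ℝ → ℝ) (m : ℝ) (a : Q d × Q d → ℂ) : Prop :=
  ContDiff ℝ (⊤ : ℕ∞) a ∧
    ∀ α β : MIdx d, ∃ C : ℝ, ∀ x : Q d × Q d,
      ‖mderiv2 α β a x‖ ≤ C * f x.1.1 ^ ((degA α : ℝ) - (degA β : ℝ)) * brF f x ^ (m - (deg β : ℝ))

/-- The finite set of multiindices of length `≤ N`. -/
def idxSet (d N : ℕ) : Finset (MIdx d) :=
  ((Finset.range (N + 1)) ×ˢ Fintype.piFinset fun _ : Fin d => Finset.range (N + 1)).filter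
    fun α => deg α ≤ N

/-- The seminorm `|a|_{S^m_f, N}`. -/
def symNorm {d : ℕ} (f : ℝ → ℝ) (m : ℝ) (N : ℕ) (a : Q d × Q d → ℂ) : ℝ :=
  ∑ α ∈ idxSet d N, ∑ β ∈ idxSet d N,
    if deg α + deg β ≤ N then
      ⨆ x : Q d × Q d,
        f x.1.1 ^ (-(degA α : ℝ) + (degA β : ℝ)) * brF f x ^ (-m + (deg β : ℝ)) *
          ‖mderiv2 α β a x‖
    else 0

/-- `p · q`. -/
def qdot {d : ℕ} (p q : Q d) : ℝ := p.1 * q.1 + ∑ i, p.2 i * q.2 i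

/-- The oscillating factor `e^{i p · v / ℏ}`. -/
def ephase {d : ℕ} (ℏ : ℝ) (p v : Q d) : ℂ :=
  Complex.exp (Complex.I * Complex.ofReal (qdot p v) / Complex.ofReal ℏ)

/-- The quantization `Op^t_ℏ(a)` of a symbol, acting on functions (trivialized half-densities). -/
def Op {d : ℕ} (ℏ t : ℝ) (a : Q d × Q d → ℂ) (u : Q d → ℂ) : Q d → ℂ :=
  fun q => ((2 * Real.pi * ℏ) ^ (d + 1) : ℝ)⁻¹ •
    ∫ p : Q d, ∫ q' : Q d,
      a (t • q + (1 - t) • q', p) * ephase ℏ p (q - q') * u q'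

/-- Membership in `C_c^∞(ℝⁿ)`. -/
def IsCc {d : ℕ} (u : Q d → ℂ) : Prop := ContDiff ℝ (⊤ : ℕ∞) u ∧ HasCompactSupport u

/-- The `L²` inner product `⟨w, v⟩ = ∫ w \bar v`. -/
def l2inner {d : ℕ} (w v : Q d → ℂ) : ℂ := ∫ q : Q d, w q * (starRingEnd ℂ) (v q)

/-- The `L²` norm. -/
def l2norm {d : ℕ} (u : Q d → ℂ) : ℝ := (∫ q : Q d, ‖u q‖ ^ 2) ^ (1 / 2 : ℝ)

/-- `Σ_{|β| ≤ N} sup |∂^β u|`. -/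
def ckNorm {d : ℕ} (N : ℕ) (u : Q d → ℂ) : ℝ :=
  ∑ β ∈ idxSet d N, ⨆ q : Q d, ‖mderiv1 β u q‖

/-- `⟨ρ ⊕ f(tr + (1-t)r')⁻¹ η⟩` evaluated at a point `(q, p, q')`. -/
def brFA {d : ℕ} (f : ℝ → ℝ) (t : ℝ) (x : Q d × Q d × Q d) : ℝ :=
  Real.sqrt (1 + x.2.1.1 ^ 2 + ∑ i, (x.2.1.2 i / f (t * x.1.1 + (1 - t) * x.2.2.1)) ^ 2)

/-- Membership in the amplitude class `BS^m_{f,t}(ℝ^{3n})`. -/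
def IsAmp {d : ℕ} (f : ℝ → ℝ) (m t : ℝ) (a : Q d × Q d × Q d → ℂ) : Prop :=
  ContDiff ℝ (⊤ : ℕ∞) a ∧
    ∀ α β γ : MIdx d, ∃ C : ℝ, ∀ x : Q d × Q d × Q d,
      ‖mderiv3 α β γ a x‖ ≤
        C * f (t * x.1.1 + (1 - t) * x.2.2.1) ^ ((degA α : ℝ) - (degA β : ℝ) + (degA γ : ℝ)) *
          brFA f t x ^ (m - (deg β : ℝ))

/-- The seminorm `|a|_{BS^m_{f,t}, N}`. -/
def ampNorm {d : ℕ} (f : ℝ → ℝ) (m t : ℝ) (N : ℕ) (a : Q d × Q d × Q d → ℂ) : ℝ :=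
  ∑ α ∈ idxSet d N, ∑ β ∈ idxSet d N, ∑ γ ∈ idxSet d N,
    if deg α + deg β + deg γ ≤ N then
      ⨆ x : Q d × Q d × Q d,
        f (t * x.1.1 + (1 - t) * x.2.2.1) ^ (-(degA α : ℝ) + (degA β : ℝ) - (degA γ : ℝ)) *
          brFA f t x ^ (-m + (deg β : ℝ)) * ‖mderiv3 α β γ a x‖
    else 0

/-- The quantization of an amplitude `a(q, p, q')`. -/
def OpAmp {d : ℕ} (ℏ : ℝ) (a : Q d × Q d × Q d → ℂ) (u : Q d → ℂ) : Q d → ℂ :=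
  fun q => ((2 * Real.pi * ℏ) ^ (d + 1) : ℝ)⁻¹ •
    ∫ p : Q d, ∫ q' : Q d, a (q, p, q') * ephase ℏ p (q - q') * u q'


/-- The rescaled localized amplitude `a^t_{jk}` of Lemma 2.11. -/
def scaledAmp (d : ℕ) (f : ℝ → ℝ) (ψ : ℝ → ℝ) (t : ℝ) (j k : ℤ)
    (a : Q d × Q d → ℂ) : Q d × Q d × Q d → ℂ :=
  fun x =>
    Complex.ofReal (ψ (x.1.1 - (j : ℝ))) * Complex.ofReal (ψ (x.2.2.1 - (k : ℝ))) *
      a ((t * x.1.1 + (1 - t) * x.2.2.1,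
            (f (t * (j : ℝ) + (1 - t) * (k : ℝ)))⁻¹ • (t • x.1.2 + (1 - t) • x.2.2.2)),
         (x.2.1.1, f (t * (j : ℝ) + (1 - t) * (k : ℝ)) • x.2.1.2))

/-- iterated directional derivative along a list, head applied first. -/
def dl {E : Type*} [NormedAddCommGroup E] [NormedSpace ℝ E]
    (l : List E) (g : E → ℂ) : E → ℂ := l.foldl (fun h v => dirD v h) g

section generic
variable {E : Type*} [NormedAddCommGroup E] [NormedSpace ℝ E]

lemma dl_nil (g : E → ℂ) : dl [] g = g := rfl

lemma dl_cons (v : E) (l : List E) (g : E → ℂ) : dl (v :: l) g = dl l (dirD v g) := rfl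

lemma dl_append (l l' : List E) (g : E → ℂ) : dl (l ++ l') g = dl l' (dl l g) := by
  simp [dl, List.foldl_append]

lemma dirD_smooth (v : E) {g : E → ℂ} (hg : ContDiff ℝ (⊤ : ℕ∞) g) :
    ContDiff ℝ (⊤ : ℕ∞) (dirD v g) := by
  unfold dirD
  exact (hg.fderiv_right (m := (⊤ : ℕ∞)) (by simp)).clm_apply contDiff_const

lemma dl_smooth (l : List E) : ∀ {g : E → ℂ}, ContDiff ℝ (⊤ : ℕ∞) g →
    ContDiff ℝ (⊤ : ℕ∞) (dl l g) := by
  induction l with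
  | nil => intro g hg; exact hg
  | cons v l ih => intro g hg; exact ih (dirD_smooth v hg)

lemma smooth_diff {g : E → ℂ} (hg : ContDiff ℝ (⊤ : ℕ∞) g) : Differentiable ℝ g :=
  hg.differentiable (by simp)

lemma dirD_comm (v w : E) {g : E → ℂ} (hg : ContDiff ℝ (⊤ : ℕ∞) g) :
    dirD v (dirD w g) = dirD w (dirD v g) := by
  have hd : Differentiable ℝ (fderiv ℝ g) :=
    (hg.fderiv_right (m := (⊤ : ℕ∞)) (by simp)).differentiable (by simp)
  have key : ∀ (v w : E) (x : E), dirD v (dirD w g) x = fderiv ℝ (fderiv ℝ g) x v w := by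
    intro v w x
    have h : HasFDerivAt (fun y => fderiv ℝ g y w) _ x :=
      (hd x).hasFDerivAt.clm_apply (hasFDerivAt_const w x)
    show fderiv ℝ (fun y => fderiv ℝ g y w) x v = _
    rw [h.fderiv]; simp
  funext x
  rw [key, key]
  have hs : IsSymmSndFDerivAt ℝ g x :=
    (hg.contDiffAt).isSymmSndFDerivAt (by simp; exact WithTop.coe_le_coe.2 (le_top : (2 : ℕ∞) ≤ ⊤))
  exact hs v w

lemma dl_perm {l l' : List E} (h : l.Perm l') : ∀ {g : E → ℂ}, ContDiff ℝ (⊤ : ℕ∞) g →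
    dl l g = dl l' g := by
  induction h with
  | nil => intro g _; rfl
  | cons v _ ih => intro g hg; exact ih (dirD_smooth v hg)
  | swap v w l => intro g hg; simp only [dl_cons]; rw [dirD_comm v w hg]
  | trans _ _ ih1 ih2 => intro g hg; rw [ih1 hg, ih2 hg]

lemma dirD_add (v : E) {g h : E → ℂ} (hg : ContDiff ℝ (⊤ : ℕ∞) g)
    (hh : ContDiff ℝ (⊤ : ℕ∞) h) : dirD v (g + h) = dirD v g + dirD v h := by
  funext x
  simp only [dirD, Pi.add_apply]
  rw [fderiv_add (smooth_diff hg x) (smooth_diff hh x)]; rfl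

lemma dirD_smul (v : E) (c : ℝ) {g : E → ℂ} (hg : ContDiff ℝ (⊤ : ℕ∞) g) :
    dirD v (c • g) = c • dirD v g := by
  funext x
  simp only [dirD, Pi.smul_apply]
  rw [fderiv_const_smul (smooth_diff hg x)]; rfl

lemma dl_add (l : List E) : ∀ {g h : E → ℂ}, ContDiff ℝ (⊤ : ℕ∞) g →
    ContDiff ℝ (⊤ : ℕ∞) h → dl l (g + h) = dl l g + dl l h := by
  induction l with
  | nil => intro g h _ _; rfl
  | cons v l ih =>
    intro g h hg hh
    simp only [dl_cons]
    rw [dirD_add v hg hh, ih (dirD_smooth v hg) (dirD_smooth v hh)]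

lemma dl_smul (l : List E) (c : ℝ) : ∀ {g : E → ℂ}, ContDiff ℝ (⊤ : ℕ∞) g →
    dl l (c • g) = c • dl l g := by
  induction l with
  | nil => intro g _; rfl
  | cons v l ih =>
    intro g hg
    simp only [dl_cons]
    rw [dirD_smul v c hg, ih (dirD_smooth v hg)]

lemma dl_replicate (v : E) (n : ℕ) : ∀ g : E → ℂ,
    dl (List.replicate n v) g = (dirD v)^[n] g := by
  induction n with
  | zero => intro g; rfl
  | succ n ih => intro g; rw [List.replicate_succ, dl_cons, ih, Function.iterate_succ_apply]

end generic

/-- list of coordinate directions of a multiindex. -/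
def lst {d : ℕ} (α : MIdx d) : List (Option (Fin d)) :=
  ((List.finRange d).reverse.flatMap fun i => List.replicate (α.2 i) (some i)) ++
    List.replicate α.1 none

/-- unit multiindices. -/
def eidx {d : ℕ} (o : Option (Fin d)) : MIdx d :=
  match o with
  | none => (1, 0)
  | some i => (0, Pi.single i 1)

/-- unit vectors. -/
def evec {d : ℕ} (o : Option (Fin d)) : Q d :=
  match o with
  | none => eR d
  | some i => eTh d i

lemma dl_lst {d : ℕ} {E : Type*} [NormedAddCommGroup E] [NormedSpace ℝ E]
    (e : Option (Fin d) → E) (α : MIdx d) (g : E → ℂ) :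
    dl ((lst α).map e) g = (dirD (e none))^[α.1]
      ((List.finRange d).foldr (fun i h => (dirD (e (some i)))^[α.2 i] h) g) := by
  unfold lst
  rw [List.map_append, dl_append, List.map_replicate, dl_replicate]
  congr 1
  generalize List.finRange d = L
  induction L with
  | nil => rfl
  | cons i L ih =>
    rw [List.reverse_cons, List.flatMap_append, List.map_append, dl_append, ih]
    simp [dl_replicate]

lemma count_none {d : ℕ} (α : MIdx d) : (lst α).count none = α.1 := by
  simp [lst, List.count_flatMap, List.count_replicate, Function.comp_def]

lemma count_some {d : ℕ} (α : MIdx d) (i : Fin d) : (lst α).count (some i) = α.2 i := by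
  simp [lst, List.count_flatMap, List.count_replicate, Function.comp_def, List.sum_reverse,
    ← List.ofFn_eq_map, List.sum_ofFn]

lemma lst_zero {d : ℕ} : lst (0 : MIdx d) = [] := by
  simp [lst]

lemma lst_add {d : ℕ} (α : MIdx d) (o : Option (Fin d)) :
    (lst (α + eidx o)).Perm (o :: lst α) := by
  rw [List.perm_iff_count]
  intro b
  cases b with
  | none =>
    rw [count_none, List.count_cons, count_none]
    cases o <;> simp [eidx]
  | some i =>
    rw [count_some, List.count_cons, count_some]
    cases o with
    | none => simp [eidx]
    | some k =>
      by_cases h : k = i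
      · subst h; simp [eidx]
      · simp [eidx, h, Pi.single_eq_of_ne (Ne.symm h)]

lemma deg_add {d : ℕ} (α : MIdx d) (o : Option (Fin d)) : deg (α + eidx o) = deg α + 1 := by
  cases o with
  | none => simp [deg, eidx]; omega
  | some i => simp [deg, eidx, Finset.sum_add_distrib]; omega

lemma degA_none {d : ℕ} (α : MIdx d) : degA (α + eidx none) = degA α := by
  simp [degA, eidx]

lemma degA_some {d : ℕ} (α : MIdx d) (i : Fin d) : degA (α + eidx (some i)) = degA α + 1 := by
  simp [degA, eidx, Finset.sum_add_distrib]

lemma lst_length {d : ℕ} (α : MIdx d) : (lst α).length = deg α := by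
  simp [lst, deg, List.length_flatMap, List.sum_reverse,
    ← List.ofFn_eq_map, List.sum_ofFn]
  omega

lemma mderiv2_eq {d : ℕ} (α β : MIdx d) (g : Q d × Q d → ℂ) :
    mderiv2 α β g = dl ((lst β).map (fun o => ((0 : Q d), (evec o : Q d))) ++
      (lst α).map (fun o => ((evec o : Q d), (0 : Q d)))) g := by
  rw [dl_append, dl_lst, dl_lst]
  rfl

lemma mderiv2_smooth {d : ℕ} (α β : MIdx d) {g : Q d × Q d → ℂ}
    (hg : ContDiff ℝ (⊤ : ℕ∞) g) : ContDiff ℝ (⊤ : ℕ∞) (mderiv2 α β g) := by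
  rw [mderiv2_eq]; exact dl_smooth _ hg

lemma mderiv2_addL {d : ℕ} (α β : MIdx d) (o : Option (Fin d)) {g : Q d × Q d → ℂ}
    (hg : ContDiff ℝ (⊤ : ℕ∞) g) :
    dirD ((evec o : Q d), (0 : Q d)) (mderiv2 α β g) = mderiv2 (α + eidx o) β g := by
  rw [mderiv2_eq, mderiv2_eq]
  have h := dl_append ((lst β).map (fun o => ((0 : Q d), (evec o : Q d))) ++
      (lst α).map (fun o => ((evec o : Q d), (0 : Q d)))) [((evec o : Q d), (0 : Q d))] g
  rw [dl_cons, dl_nil] at h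
  rw [← h]
  apply dl_perm _ hg
  rw [List.append_assoc]
  apply List.Perm.append_left
  refine (List.perm_append_singleton _ _).trans ?_
  exact ((lst_add α o).map (fun o => ((evec o : Q d), (0 : Q d)))).symm

lemma mderiv2_addR {d : ℕ} (α β : MIdx d) (o : Option (Fin d)) {g : Q d × Q d → ℂ}
    (hg : ContDiff ℝ (⊤ : ℕ∞) g) :
    dirD ((0 : Q d), (evec o : Q d)) (mderiv2 α β g) = mderiv2 α (β + eidx o) g := by
  rw [mderiv2_eq, mderiv2_eq]
  have h := dl_append ((lst β).map (fun o => ((0 : Q d), (evec o : Q d))) ++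
      (lst α).map (fun o => ((evec o : Q d), (0 : Q d)))) [((0 : Q d), (evec o : Q d))] g
  rw [dl_cons, dl_nil] at h
  rw [← h]
  apply dl_perm _ hg
  refine (List.perm_append_singleton _ _).trans ?_
  rw [← List.cons_append]
  apply List.Perm.append_right
  exact ((lst_add β o).map (fun o => ((0 : Q d), (evec o : Q d)))).symm

lemma mderiv2_zero {d : ℕ} (g : Q d × Q d → ℂ) : mderiv2 0 0 g = g := by
  rw [mderiv2_eq, lst_zero]; rfl

/-- directions in the triple space. -/
def dir3 {d : ℕ} (v : Fin 3 × Option (Fin d)) : Q d × Q d × Q d :=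
  match v.1 with
  | 0 => (evec v.2, 0, 0)
  | 1 => (0, evec v.2, 0)
  | 2 => (0, 0, evec v.2)

lemma mderiv3_eq {d : ℕ} (α β γ : MIdx d) (g : Q d × Q d × Q d → ℂ) :
    mderiv3 α β γ g = dl ((((lst γ).map fun o => ((2 : Fin 3), o)) ++
      ((lst β).map fun o => ((1 : Fin 3), o)) ++
      ((lst α).map fun o => ((0 : Fin 3), o))).map dir3) g := by
  rw [List.map_append, List.map_append, List.map_map, List.map_map, List.map_map,
    dl_append, dl_append, dl_lst, dl_lst, dl_lst]
  rfl

/-- the linear map in the argument of `scaledAmp`. -/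
def Lm (d : ℕ) (t F : ℝ) : (Q d × Q d × Q d) →L[ℝ] (Q d × Q d) :=
  LinearMap.toContinuousLinearMap
  { toFun := fun x => ((t * x.1.1 + (1 - t) * x.2.2.1,
            F⁻¹ • (t • x.1.2 + (1 - t) • x.2.2.2)), (x.2.1.1, F • x.2.1.2))
    map_add' := by
      intro x y
      ext <;> simp <;> ring
    map_smul' := by
      intro c x
      ext <;> simp <;> ring }

lemma Lm_apply (d : ℕ) (t F : ℝ) (x : Q d × Q d × Q d) :
    Lm d t F x = ((t * x.1.1 + (1 - t) * x.2.2.1,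
            F⁻¹ • (t • x.1.2 + (1 - t) • x.2.2.2)), (x.2.1.1, F • x.2.1.2)) := rfl

/-- scaling constants. -/
def cA {d : ℕ} (F : ℝ) (o : Option (Fin d)) : ℝ :=
  match o with
  | none => 1
  | some _ => F

lemma Lm_dir0 (d : ℕ) (t F : ℝ) (o : Option (Fin d)) :
    Lm d t F (dir3 (0, o)) = (t * cA F⁻¹ o) • ((evec o : Q d), (0 : Q d)) := by
  rw [Lm_apply]
  cases o <;> ext <;> simp [dir3, evec, eR, eTh, cA] <;> ring

lemma Lm_dir1 (d : ℕ) (t F : ℝ) (o : Option (Fin d)) :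
    Lm d t F (dir3 (1, o)) = (cA F o) • ((0 : Q d), (evec o : Q d)) := by
  rw [Lm_apply]
  cases o <;> ext <;> simp [dir3, evec, eR, eTh, cA] <;> ring

lemma Lm_dir2 (d : ℕ) (t F : ℝ) (o : Option (Fin d)) :
    Lm d t F (dir3 (2, o)) = ((1 - t) * cA F⁻¹ o) • ((evec o : Q d), (0 : Q d)) := by
  rw [Lm_apply]
  cases o <;> ext <;> simp [dir3, evec, eR, eTh, cA] <;> ring

/-- the building blocks. -/
def GG (d : ℕ) (ψ : ℝ → ℝ) (t F : ℝ) (j k : ℤ) (a : Q d × Q d → ℂ)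
    (s s' : ℕ) (α β : MIdx d) : Q d × Q d × Q d → ℂ :=
  fun x => (((iteratedDeriv s ψ (x.1.1 - (j : ℝ)) * iteratedDeriv s' ψ (x.2.2.1 - (k : ℝ))
    * (F⁻¹ ^ degA α * F ^ degA β) : ℝ)) : ℂ) * mderiv2 α β a (Lm d t F x)

lemma iter_smooth {ψ : ℝ → ℝ} (hψ : ContDiff ℝ (⊤ : ℕ∞) ψ) (s : ℕ) :
    ContDiff ℝ (⊤ : ℕ∞) (iteratedDeriv s ψ) := by
  rw [iteratedDeriv_eq_iterate]
  exact hψ.iterate_deriv s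

lemma GG_smooth (d : ℕ) {ψ : ℝ → ℝ} (hψ : ContDiff ℝ (⊤ : ℕ∞) ψ) (t F : ℝ) (j k : ℤ)
    {a : Q d × Q d → ℂ} (ha : ContDiff ℝ (⊤ : ℕ∞) a)
    (s s' : ℕ) (α β : MIdx d) : ContDiff ℝ (⊤ : ℕ∞) (GG d ψ t F j k a s s' α β) := by
  have h1 := iter_smooth hψ s
  have h2 := iter_smooth hψ s'
  have h3 := mderiv2_smooth α β ha
  have h4 : ContDiff ℝ (⊤ : ℕ∞) (Lm d t F) := (Lm d t F).contDiff
  unfold GG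
  apply ContDiff.mul
  · apply Complex.ofRealCLM.contDiff.comp
    apply ContDiff.mul _ contDiff_const
    apply ContDiff.mul
    · exact h1.comp (by fun_prop)
    · exact h2.comp (by fun_prop)
  · exact h3.comp h4

lemma GG_dir (d : ℕ) {ψ : ℝ → ℝ} (hψ : ContDiff ℝ (⊤ : ℕ∞) ψ) (t F : ℝ) (j k : ℤ)
    {a : Q d × Q d → ℂ} (ha : ContDiff ℝ (⊤ : ℕ∞) a)
    (s s' : ℕ) (α β : MIdx d) (v x : Q d × Q d × Q d) :
    dirD v (GG d ψ t F j k a s s' α β) x =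
      v.1.1 • GG d ψ t F j k a (s + 1) s' α β x + v.2.2.1 • GG d ψ t F j k a s (s' + 1) α β x +
      (((iteratedDeriv s ψ (x.1.1 - (j : ℝ)) * iteratedDeriv s' ψ (x.2.2.1 - (k : ℝ))
    * (F⁻¹ ^ degA α * F ^ degA β) : ℝ)) : ℂ) *
      dirD (Lm d t F v) (mderiv2 α β a) (Lm d t F x) := by
  have hd : ∀ s y, HasDerivAt (iteratedDeriv s ψ) (iteratedDeriv (s + 1) ψ y) y := by
    intro s y
    rw [iteratedDeriv_succ]
    exact ((iter_smooth hψ s).differentiable (by simp) y).hasDerivAt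
  have e1 : HasFDerivAt (fun x : Q d × Q d × Q d => x.1.1 - (j : ℝ))
    ((ContinuousLinearMap.fst ℝ ℝ _).comp (ContinuousLinearMap.fst ℝ (Q d) (Q d × Q d))) x :=
    (((ContinuousLinearMap.fst ℝ ℝ _).comp
      (ContinuousLinearMap.fst ℝ (Q d) (Q d × Q d))).hasFDerivAt).sub_const _
  have e2 : HasFDerivAt (fun x : Q d × Q d × Q d => x.2.2.1 - (k : ℝ))
    ((ContinuousLinearMap.fst ℝ ℝ _).comp ((ContinuousLinearMap.snd ℝ (Q d) (Q d)).comp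
     (ContinuousLinearMap.snd ℝ (Q d) (Q d × Q d)))) x :=
    (((ContinuousLinearMap.fst ℝ ℝ _).comp ((ContinuousLinearMap.snd ℝ (Q d) (Q d)).comp
     (ContinuousLinearMap.snd ℝ (Q d) (Q d × Q d)))).hasFDerivAt).sub_const _
  have f1 := (hd s (x.1.1 - (j : ℝ))).comp_hasFDerivAt x e1
  have f2 := (hd s' (x.2.2.1 - (k : ℝ))).comp_hasFDerivAt x e2
  have f3 := Complex.ofRealCLM.hasFDerivAt.comp x
    ((f1.mul f2).mul_const (F⁻¹ ^ degA α * F ^ degA β))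
  have f4 := ((smooth_diff (mderiv2_smooth α β ha)) (Lm d t F x)).hasFDerivAt.comp x
    (Lm d t F).hasFDerivAt
  have f5 := f3.mul f4
  have : HasFDerivAt (GG d ψ t F j k a s s' α β) _ x := f5
  unfold dirD
  rw [this.fderiv]
  simp [GG]
  ring

/-- updated index -/
def upA {d : ℕ} (v : Fin 3 × Option (Fin d)) (α : MIdx d) : MIdx d :=
  if v.1 = 1 then α else α + eidx v.2

/-- updated index -/
def upB {d : ℕ} (v : Fin 3 × Option (Fin d)) (β : MIdx d) : MIdx d :=
  if v.1 = 1 then β + eidx v.2 else β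

lemma cA_inv {d : ℕ} (F : ℝ) (o : Option (Fin d)) : cA F⁻¹ o = (cA F o)⁻¹ := by
  cases o <;> simp [cA]

lemma degA_cA {d : ℕ} (F : ℝ) (α : MIdx d) (o : Option (Fin d)) :
    F ^ degA (α + eidx o) = F ^ degA α * cA F o := by
  cases o with
  | none => simp [degA_none, cA]
  | some i => simp [degA_some, cA, pow_succ]

lemma dirD_smulv {E : Type*} [NormedAddCommGroup E] [NormedSpace ℝ E] (c : ℝ) (v : E)
    (g : E → ℂ) (x : E) : dirD (c • v) g x = c • dirD v g x := by
  simp [dirD]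

lemma GG_step (d : ℕ) {ψ : ℝ → ℝ} (hψ : ContDiff ℝ (⊤ : ℕ∞) ψ) (t F : ℝ)
    (ht : t ∈ Set.Icc (0 : ℝ) 1) (j k : ℤ)
    {a : Q d × Q d → ℂ} (ha : ContDiff ℝ (⊤ : ℕ∞) a)
    (s s' : ℕ) (α β : MIdx d) (v : Fin 3 × Option (Fin d)) :
    ∃ c1 c2 c3 : ℝ, |c1| ≤ 1 ∧ |c2| ≤ 1 ∧ |c3| ≤ 1 ∧ (v.1 = 1 → c1 = 0 ∧ c2 = 0) ∧
    dirD (dir3 v) (GG d ψ t F j k a s s' α β) =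
      c1 • GG d ψ t F j k a (s + 1) s' α β + c2 • GG d ψ t F j k a s (s' + 1) α β +
      c3 • GG d ψ t F j k a s s' (upA v α) (upB v β) := by
  have hv : ∀ o : Option (Fin d), |(evec o : Q d).1| ≤ 1 := by
    intro o; cases o <;> simp [evec, eR, eTh]
  have ht1 : |t| ≤ 1 := abs_le.2 ⟨by linarith [ht.1], ht.2⟩
  have ht2 : |1 - t| ≤ 1 := abs_le.2 ⟨by linarith [ht.2], by linarith [ht.1]⟩
  obtain ⟨i, o⟩ := v
  fin_cases i
  · refine ⟨(evec o : Q d).1, 0, t, hv o, by simp, ht1, by simp, ?_⟩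
    funext x
    rw [GG_dir d hψ t F j k ha]
    simp only [Fin.zero_eta, Lm_dir0, dirD_smulv, mderiv2_addL α β o ha]
    simp [GG, upA, upB, degA_cA, dir3, cA_inv]
    ring
  · refine ⟨0, 0, 1, by simp, by simp, by simp, by simp, ?_⟩
    funext x
    rw [GG_dir d hψ t F j k ha]
    simp only [Fin.mk_one, Lm_dir1, dirD_smulv, mderiv2_addR α β o ha]
    simp [GG, upA, upB, degA_cA, dir3, cA_inv]
    ring
  · refine ⟨0, (evec o : Q d).1, 1 - t, by simp, hv o, ht2, by simp, ?_⟩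
    funext x
    rw [GG_dir d hψ t F j k ha]
    simp only [Fin.reduceFinMk, Lm_dir2, dirD_smulv, mderiv2_addL α β o ha]
    simp [GG, upA, upB, degA_cA, dir3, cA_inv]
    ring

lemma brF_pos {d : ℕ} (f : ℝ → ℝ) (x : Q d × Q d) : 0 < brF f x := by
  unfold brF
  apply Real.sqrt_pos.2
  have : 0 ≤ ∑ i, (x.2.2 i / f x.1.1) ^ 2 := Finset.sum_nonneg fun i _ => sq_nonneg _
  nlinarith [sq_nonneg x.2.1]

lemma brP_pos {d : ℕ} (x : Q d) : 0 < brP x := by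
  unfold brP
  apply Real.sqrt_pos.2
  have : 0 ≤ ∑ i, (x.2 i) ^ 2 := Finset.sum_nonneg fun i _ => sq_nonneg _
  nlinarith [sq_nonneg x.1]

lemma sym_term_nonneg {d : ℕ} {f : ℝ → ℝ} (hf1 : ∀ r, 1 ≤ f r) (m : ℝ) (N : ℕ)
    (a : Q d × Q d → ℂ) (α β : MIdx d) : 0 ≤ (if deg α + deg β ≤ N then
      ⨆ x : Q d × Q d,
        f x.1.1 ^ (-(degA α : ℝ) + (degA β : ℝ)) * brF f x ^ (-m + (deg β : ℝ)) *
          ‖mderiv2 α β a x‖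
    else 0) := by
  split_ifs
  · apply Real.iSup_nonneg
    intro x
    have h1 : 0 ≤ f x.1.1 := by linarith [hf1 x.1.1]
    have h2 := (brF_pos f x).le
    positivity
  · exact le_rfl

lemma symNorm_nonneg {d : ℕ} {f : ℝ → ℝ} (hf1 : ∀ r, 1 ≤ f r) (m : ℝ) (N : ℕ)
    (a : Q d × Q d → ℂ) : 0 ≤ symNorm f m N a :=
  Finset.sum_nonneg fun _ _ => Finset.sum_nonneg fun _ _ => sym_term_nonneg hf1 m N a _ _

lemma mem_idxSet {d N : ℕ} {α : MIdx d} (h : deg α ≤ N) : α ∈ idxSet d N := by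
  have h1 : ∀ i, α.2 i ≤ ∑ i, α.2 i := fun i =>
    Finset.single_le_sum (f := α.2) (fun _ _ => Nat.zero_le _) (Finset.mem_univ i)
  unfold idxSet
  simp only [Finset.mem_filter, Finset.mem_product, Finset.mem_range, Fintype.mem_piFinset]
  refine ⟨⟨?_, fun i => ?_⟩, h⟩
  · unfold deg at h; omega
  · have := h1 i; unfold deg at h; omega

lemma sym_bound {d : ℕ} {f : ℝ → ℝ} (hf1 : ∀ r, 1 ≤ f r) (m : ℝ) (N : ℕ)
    (a : Q d × Q d → ℂ) (ha : IsSymbol f m a) (α β : MIdx d) (h : deg α + deg β ≤ N)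
    (x : Q d × Q d) :
    ‖mderiv2 α β a x‖ ≤ symNorm f m N a * f x.1.1 ^ ((degA α : ℝ) - (degA β : ℝ)) *
      brF f x ^ (m - (deg β : ℝ)) := by
  have key : ∀ (x : Q d × Q d) (C : ℝ), ‖mderiv2 α β a x‖ ≤
      C * f x.1.1 ^ ((degA α : ℝ) - (degA β : ℝ)) * brF f x ^ (m - (deg β : ℝ)) ↔
      f x.1.1 ^ (-(degA α : ℝ) + (degA β : ℝ)) * brF f x ^ (-m + (deg β : ℝ)) *
          ‖mderiv2 α β a x‖ ≤ C := by
    intro x C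
    have h1 : 0 < f x.1.1 := by linarith [hf1 x.1.1]
    have h2 := brF_pos f x
    rw [show -(degA α : ℝ) + (degA β : ℝ) = -((degA α : ℝ) - (degA β : ℝ)) by ring,
      show -m + (deg β : ℝ) = -(m - (deg β : ℝ)) by ring, Real.rpow_neg h1.le,
      Real.rpow_neg h2.le]
    have h3 := Real.rpow_pos_of_pos h1 ((degA α : ℝ) - (degA β : ℝ))
    have h4 := Real.rpow_pos_of_pos h2 (m - (deg β : ℝ))
    rw [← mul_inv, inv_mul_le_iff₀ (by positivity)]
    constructor <;> intro h <;> linarith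
  rw [key]
  obtain ⟨C, hC⟩ := ha.2 α β
  have hb : BddAbove (Set.range fun x : Q d × Q d =>
      f x.1.1 ^ (-(degA α : ℝ) + (degA β : ℝ)) * brF f x ^ (-m + (deg β : ℝ)) *
          ‖mderiv2 α β a x‖) := by
    refine ⟨C, ?_⟩
    rintro _ ⟨y, rfl⟩
    exact (key y C).1 (hC y)
  refine (le_ciSup hb x).trans ?_
  have s1 := Finset.single_le_sum (s := idxSet d N) (f := fun β => (if deg α + deg β ≤ N then
      ⨆ x : Q d × Q d,
        f x.1.1 ^ (-(degA α : ℝ) + (degA β : ℝ)) * brF f x ^ (-m + (deg β : ℝ)) *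
          ‖mderiv2 α β a x‖
    else 0)) (fun β _ => sym_term_nonneg hf1 m N a α β) (mem_idxSet (show deg β ≤ N by omega))
  have s2 := Finset.single_le_sum (s := idxSet d N) (f := fun α => ∑ β ∈ idxSet d N,
    (if deg α + deg β ≤ N then
      ⨆ x : Q d × Q d,
        f x.1.1 ^ (-(degA α : ℝ) + (degA β : ℝ)) * brF f x ^ (-m + (deg β : ℝ)) *
          ‖mderiv2 α β a x‖
    else 0)) (fun α _ => Finset.sum_nonneg fun β _ => sym_term_nonneg hf1 m N a α β)
      (mem_idxSet (show deg α ≤ N by omega))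
  simp only [h, if_true] at s1
  exact s1.trans s2

lemma f_comp {f : ℝ → ℝ} (hf : GoodF f) : ∃ K : ℝ, 1 ≤ K ∧ ∀ x y, |x - y| ≤ 1 →
    f x ≤ K * f y := by
  obtain ⟨h1, h2, h3⟩ := hf
  obtain ⟨C, hC⟩ := h3 1 le_rfl
  have hC0 : 0 ≤ C := (abs_nonneg _).trans (hC 0)
  have hp : ∀ x, 0 < f x := fun x => by linarith [h2 x]
  refine ⟨Real.exp C, Real.one_le_exp hC0, fun x y hxy => ?_⟩
  have hd : ∀ z ∈ Set.univ, DifferentiableAt ℝ (fun s => Real.log (f s)) z := fun z _ =>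
    ((h1.differentiable (by simp)) z).log (hp z).ne'
  have hb : ∀ z ∈ Set.univ, ‖deriv (fun s => Real.log (f s)) z‖ ≤ C := fun z _ => by
    have := hC z; rwa [iteratedDeriv_one] at this
  have := convex_univ.norm_image_sub_le_of_norm_deriv_le hd hb (Set.mem_univ y) (Set.mem_univ x)
  rw [Real.norm_eq_abs, Real.norm_eq_abs] at this
  have h5 : Real.log (f x) ≤ C + Real.log (f y) := by
    have := (le_abs_self _).trans this
    nlinarith
  calc f x = Real.exp (Real.log (f x)) := (Real.exp_log (hp x)).symm
    _ ≤ Real.exp (C + Real.log (f y)) := Real.exp_le_exp.2 h5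
    _ = _ := by rw [Real.exp_add, Real.exp_log (hp y)]

lemma rpow_comp {K u v : ℝ} (e : ℝ) (hK : 1 ≤ K) (hu : 0 < u) (hv : 0 < v) (h1 : u ≤ K * v)
    (h2 : v ≤ K * u) : u ^ e ≤ K ^ |e| * v ^ e := by
  have hK0 : 0 < K := by linarith
  rcases le_total 0 e with he | he
  · rw [abs_of_nonneg he, ← Real.mul_rpow hK0.le hv.le]
    exact Real.rpow_le_rpow hu.le h1 he
  · rw [abs_of_nonpos he, Real.rpow_neg hK0.le, ← Real.inv_rpow hK0.le,
      ← Real.mul_rpow (by positivity) hv.le]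
    apply Real.rpow_le_rpow_of_nonpos (by positivity) _ he
    rw [inv_mul_le_iff₀ hK0]; exact h2

lemma br_comp {d : ℕ} {K c : ℝ} (hK : 1 ≤ K) (hc : 0 < c) (h1 : c ≤ K)
    (ρ : ℝ) (η : Fin d → ℝ) :
    Real.sqrt (1 + ρ ^ 2 + ∑ i, (c * η i) ^ 2) ≤ K * Real.sqrt (1 + ρ ^ 2 + ∑ i, (η i) ^ 2) := by
  have hK0 : 0 ≤ K := by linarith
  rw [← Real.sqrt_sq hK0, ← Real.sqrt_mul (sq_nonneg K)]
  apply Real.sqrt_le_sqrt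
  have h2 : ∑ i, (c * η i) ^ 2 ≤ K ^ 2 * ∑ i, (η i) ^ 2 := by
    rw [Finset.mul_sum]
    apply Finset.sum_le_sum
    intro i _
    rw [mul_pow]
    gcongr
  have h3 : 1 ≤ K ^ 2 := by nlinarith
  nlinarith [sq_nonneg ρ]

lemma psi_bound {ψ : ℝ → ℝ} (hψ : ContDiff ℝ (⊤ : ℕ∞) ψ) (hψc : HasCompactSupport ψ) (s : ℕ) :
    ∃ C, 0 ≤ C ∧ ∀ r, |iteratedDeriv s ψ r| ≤ C := by
  have hs : HasCompactSupport (iteratedDeriv s ψ) := by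
    induction s with
    | zero => simpa using hψc
    | succ s ih => rw [iteratedDeriv_succ]; exact ih.deriv
  obtain ⟨C, hC⟩ := hs.exists_bound_of_continuous (iter_smooth hψ s).continuous
  exact ⟨C, (norm_nonneg _).trans (hC 0), hC⟩

lemma psi_supp {ψ : ℝ → ℝ} (hψsupp : tsupport ψ ⊆ Set.Ioo (-1 : ℝ) 1) (s : ℕ) (r : ℝ)
    (h : iteratedDeriv s ψ r ≠ 0) : |r| ≤ 1 := by
  have hs : tsupport (iteratedDeriv s ψ) ⊆ tsupport ψ := by
    clear h
    induction s with
    | zero => simp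
    | succ s ih =>
      rw [iteratedDeriv_succ]
      exact (closure_minimal support_deriv_subset (isClosed_tsupport _)).trans ih
  have := hψsupp (hs (subset_tsupport _ h))
  exact abs_le.2 ⟨this.1.le, this.2.le⟩

lemma base_bound (d : ℕ) {f : ℝ → ℝ} (hf : GoodF f) (m : ℝ)
    {ψ : ℝ → ℝ} (hψs : ContDiff ℝ (⊤ : ℕ∞) ψ) (hψc : HasCompactSupport ψ)
    (hψsupp : tsupport ψ ⊆ Set.Ioo (-1 : ℝ) 1) (N s s' : ℕ) (α β : MIdx d)
    (hN : deg α + deg β ≤ N) :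
    ∃ C : ℝ, 0 ≤ C ∧ ∀ t ∈ Set.Icc (0 : ℝ) 1, ∀ j k : ℤ, ∀ a : Q d × Q d → ℂ, IsSymbol f m a →
      ∀ x : Q d × Q d × Q d,
        ‖GG d ψ t (f (t * (j : ℝ) + (1 - t) * (k : ℝ))) j k a s s' α β x‖ ≤
          C * symNorm f m N a * brP x.2.1 ^ (m - (deg β : ℝ)) := by
  obtain ⟨K, hK, hKf⟩ := f_comp hf
  obtain ⟨C1, hC10, hC1⟩ := psi_bound hψs hψc s
  obtain ⟨C2, hC20, hC2⟩ := psi_bound hψs hψc s'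
  have hK0 : 0 < K := by linarith
  refine ⟨C1 * C2 * (K ^ |(degA α : ℝ) - (degA β : ℝ)| * K ^ |m - (deg β : ℝ)|), by positivity, ?_⟩
  intro t ht j k a ha x
  have hS := symNorm_nonneg hf.2.1 m N a
  have hP := brP_pos x.2.1
  set F := f (t * (j : ℝ) + (1 - t) * (k : ℝ)) with hF
  have hF0 : 0 < F := by linarith [hf.2.1 (t * (j : ℝ) + (1 - t) * (k : ℝ))]
  by_cases h1 : iteratedDeriv s ψ (x.1.1 - (j : ℝ)) = 0
  · simp only [GG, h1]; simp; positivity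
  by_cases h2 : iteratedDeriv s' ψ (x.2.2.1 - (k : ℝ)) = 0
  · simp only [GG, h2]; simp; positivity
  have g1 := abs_le.1 (psi_supp hψsupp s _ h1)
  have g2 := abs_le.1 (psi_supp hψsupp s' _ h2)
  set R := t * x.1.1 + (1 - t) * x.2.2.1 with hR
  have hR0 : 0 < f R := by linarith [hf.2.1 R]
  have hRF : |R - (t * (j : ℝ) + (1 - t) * (k : ℝ))| ≤ 1 := by
    rw [abs_le, hR]
    obtain ⟨ht0, ht1⟩ := ht
    constructor <;> nlinarith
  have i1 : f R ≤ K * F := hKf _ _ hRF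
  have i2 : F ≤ K * f R := hKf _ _ (by rwa [abs_sub_comm])
  have b1 := sym_bound hf.2.1 m N a ha α β hN (Lm d t F x)
  have e1 : (Lm d t F x).1.1 = R := rfl
  rw [e1] at b1
  have b2 := rpow_comp ((degA α : ℝ) - (degA β : ℝ)) hK hR0 hF0 i1 i2
  have hbr : brF f (Lm d t F x) =
      Real.sqrt (1 + x.2.1.1 ^ 2 + ∑ i, ((F / f R) * x.2.1.2 i) ^ 2) := by
    unfold brF
    rw [e1]
    congr 3
    funext i
    simp [Lm_apply]
    ring
  have c1 : brF f (Lm d t F x) ≤ K * brP x.2.1 := by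
    rw [hbr]
    exact br_comp hK (by positivity) ((div_le_iff₀ hR0).2 i2) _ _
  have c2 : brP x.2.1 ≤ K * brF f (Lm d t F x) := by
    rw [hbr]
    have := br_comp hK (c := f R / F) (by positivity) ((div_le_iff₀ hF0).2 i1) x.2.1.1
      (fun i => (F / f R) * x.2.1.2 i)
    refine le_trans (le_of_eq ?_) this
    unfold brP
    congr 3
    funext i
    field_simp
  have b3 := rpow_comp (m - (deg β : ℝ)) hK (brF_pos f _) hP c1 c2
  have hW : F⁻¹ ^ degA α * F ^ degA β * F ^ ((degA α : ℝ) - (degA β : ℝ)) = 1 := by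
    rw [Real.rpow_sub hF0, Real.rpow_natCast, Real.rpow_natCast, inv_pow]
    field_simp
  have hWp : 0 < F⁻¹ ^ degA α * F ^ degA β := by positivity
  unfold GG
  rw [norm_mul, Complex.norm_real, norm_mul, norm_mul, Real.norm_eq_abs, Real.norm_eq_abs,
    Real.norm_eq_abs, abs_of_pos hWp]
  set W := F⁻¹ ^ degA α * F ^ degA β
  set S := symNorm f m N a
  set FE := F ^ ((degA α : ℝ) - (degA β : ℝ))
  set PE := brP x.2.1 ^ (m - (deg β : ℝ))
  have hFE : 0 < FE := Real.rpow_pos_of_pos hF0 _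
  have hPE : 0 < PE := Real.rpow_pos_of_pos hP _
  have hB := (Real.rpow_pos_of_pos (brF_pos f (Lm d t F x)) (m - (deg β : ℝ))).le
  set K1 := K ^ |(degA α : ℝ) - (degA β : ℝ)|
  set K2 := K ^ |m - (deg β : ℝ)|
  have hK1 : 0 < K1 := Real.rpow_pos_of_pos hK0 _
  have hK2 : 0 < K2 := Real.rpow_pos_of_pos hK0 _
  have b4 : ‖mderiv2 α β a (Lm d t F x)‖ ≤ S * (K1 * FE) * (K2 * PE) := by
    refine b1.trans ?_
    gcongr
  calc _ ≤ C1 * C2 * W * (S * (K1 * FE) * (K2 * PE)) := by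
        gcongr
        · exact hC1 _
        · exact hC2 _
    _ = C1 * C2 * (K1 * K2) * S * PE * (W * FE) := by ring
    _ = _ := by rw [hW]; ring

/-- number of momentum directions. -/
def np {d : ℕ} (V : List (Fin 3 × Option (Fin d))) : ℕ := V.countP fun v => v.1 = 1

lemma main_ind (d : ℕ) {f : ℝ → ℝ} (hf : GoodF f) (m : ℝ)
    {ψ : ℝ → ℝ} (hψs : ContDiff ℝ (⊤ : ℕ∞) ψ) (hψc : HasCompactSupport ψ)
    (hψsupp : tsupport ψ ⊆ Set.Ioo (-1 : ℝ) 1) (N : ℕ) (V : List (Fin 3 × Option (Fin d))) :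
    ∀ (s s' : ℕ) (α β : MIdx d) (_ : deg α + deg β + V.length ≤ N),
    ∃ C : ℝ, 0 ≤ C ∧ ∀ t ∈ Set.Icc (0 : ℝ) 1, ∀ j k : ℤ, ∀ a : Q d × Q d → ℂ, IsSymbol f m a →
      ∀ x : Q d × Q d × Q d,
        ‖dl (V.map dir3) (GG d ψ t (f (t * (j : ℝ) + (1 - t) * (k : ℝ))) j k a s s' α β) x‖ ≤
          C * symNorm f m N a * brP x.2.1 ^ (m - ((deg β + np V : ℕ) : ℝ)) := by
  induction V with
  | nil =>
    intro s s' α β h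
    exact base_bound d hf m hψs hψc hψsupp N s s' α β (by simpa using h)
  | cons v V ih =>
    intro s s' α β h
    rw [List.length_cons] at h
    have hnp : np (v :: V) = np V + if v.1 = 1 then 1 else 0 := by
      simp [np, List.countP_cons]
    have hdeg : deg (upB v β) + np V = deg β + np (v :: V) := by
      rw [hnp]; unfold upB; split_ifs
      · rw [deg_add]; omega
      · omega
    have hlen : deg (upA v α) + deg (upB v β) + V.length ≤ N := by
      unfold upA upB; split_ifs <;> rw [deg_add] <;> omega
    obtain ⟨A1, hA1, H1⟩ := ih (s + 1) s' α β (by omega)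
    obtain ⟨A2, hA2, H2⟩ := ih s (s' + 1) α β (by omega)
    obtain ⟨A3, hA3, H3⟩ := ih s s' (upA v α) (upB v β) hlen
    refine ⟨A1 + A2 + A3, by positivity, ?_⟩
    intro t ht j k a ha x
    have B1 := H1 t ht j k a ha x
    have B2 := H2 t ht j k a ha x
    have B3 := H3 t ht j k a ha x
    set F := f (t * (j : ℝ) + (1 - t) * (k : ℝ))
    have hS := symNorm_nonneg hf.2.1 m N a
    have hP := brP_pos x.2.1
    rw [hdeg] at B3
    obtain ⟨c1, c2, c3, hc1, hc2, hc3, hc, he⟩ := GG_step d hψs t F ht j k ha.1 s s' α β v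
    have g1 := GG_smooth d hψs t F j k ha.1 (s + 1) s' α β
    have g2 := GG_smooth d hψs t F j k ha.1 s (s' + 1) α β
    have g3 := GG_smooth d hψs t F j k ha.1 s s' (upA v α) (upB v β)
    have k1 : ContDiff ℝ (⊤ : ℕ∞) (c1 • GG d ψ t F j k a (s + 1) s' α β) := g1.const_smul c1
    have k2 : ContDiff ℝ (⊤ : ℕ∞) (c2 • GG d ψ t F j k a s (s' + 1) α β) := g2.const_smul c2
    have k3 : ContDiff ℝ (⊤ : ℕ∞) (c3 • GG d ψ t F j k a s s' (upA v α) (upB v β)) :=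
      g3.const_smul c3
    have k12 : ContDiff ℝ (⊤ : ℕ∞) (c1 • GG d ψ t F j k a (s + 1) s' α β +
      c2 • GG d ψ t F j k a s (s' + 1) α β) := k1.add k2
    rw [List.map_cons, dl_cons, he, dl_add _ k12 k3, dl_add _ k1 k2, dl_smul _ _ g1,
      dl_smul _ _ g2, dl_smul _ _ g3]
    simp only [Pi.add_apply, Pi.smul_apply]
    have gen : ∀ (c : ℝ) (z : ℂ) (A B : ℝ), |c| ≤ 1 → ‖z‖ ≤ A → A ≤ B → ‖c • z‖ ≤ B := by
      intro c z A B h1 h2 h3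
      rw [norm_smul, Real.norm_eq_abs]
      nlinarith [norm_nonneg z, abs_nonneg c]
    have D3 := gen c3 _ _ _ hc3 B3 le_rfl
    have hPE := (Real.rpow_pos_of_pos hP (m - ((deg β + np (v :: V) : ℕ) : ℝ))).le
    have D12 : ‖c1 • dl (V.map dir3) (GG d ψ t F j k a (s + 1) s' α β) x‖ ≤ A1 *
        symNorm f m N a * brP x.2.1 ^ (m - ((deg β + np (v :: V) : ℕ) : ℝ)) ∧
        ‖c2 • dl (V.map dir3) (GG d ψ t F j k a s (s' + 1) α β) x‖ ≤ A2 *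
        symNorm f m N a * brP x.2.1 ^ (m - ((deg β + np (v :: V) : ℕ) : ℝ)) := by
      by_cases hv : v.1 = 1
      · obtain ⟨z1, z2⟩ := hc hv
        rw [z1, z2, zero_smul, zero_smul, norm_zero]
        constructor <;> positivity
      · have hn : np (v :: V) = np V := by rw [hnp, if_neg hv]; omega
        rw [hn]
        exact ⟨gen c1 _ _ _ hc1 B1 le_rfl, gen c2 _ _ _ hc2 B2 le_rfl⟩
    refine (norm_add₃_le).trans ?_
    linarith [D12.1, D12.2]

/-- uniform amplitude estimates for the rescaled localized amplitudes. -/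
theorem statement8 (d : ℕ) (f : ℝ → ℝ) (hf : GoodF f) (m : ℝ)
    (ψ : ℝ → ℝ) (hψs : ContDiff ℝ (⊤ : ℕ∞) ψ) (hψc : HasCompactSupport ψ)
    (hψ0 : ∀ r : ℝ, 0 ≤ ψ r) (hψsupp : tsupport ψ ⊆ Set.Ioo (-1 : ℝ) 1)
    (hψsum : ∀ r : ℝ, ∑' j : ℤ, ψ (r - (j : ℝ)) = 1) :
    ∀ α β γ : MIdx d, ∃ C > (0 : ℝ), ∃ N' : ℕ,
      ∀ t ∈ Set.Icc (0 : ℝ) 1, ∀ j k : ℤ, ∀ a : Q d × Q d → ℂ, IsSymbol f m a →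
        ∀ x : Q d × Q d × Q d,
          ‖mderiv3 α β γ (scaledAmp d f ψ t j k a) x‖
            ≤ C * symNorm f m N' a * brP x.2.1 ^ (m - (deg β : ℝ)) := by
  intro α β γ
  obtain ⟨C, hC, H⟩ := main_ind d hf m hψs hψc hψsupp (deg γ + deg β + deg α)
    (((lst γ).map fun o => ((2 : Fin 3), o)) ++ ((lst β).map fun o => ((1 : Fin 3), o)) ++
      ((lst α).map fun o => ((0 : Fin 3), o))) 0 0 0 0 (by
        simp [lst_length]; simp [deg]; omega)
  refine ⟨C + 1, by linarith, deg γ + deg β + deg α, ?_⟩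
  intro t ht j k a ha x
  have h := H t ht j k a ha x
  have hnp : deg (0 : MIdx d) + np (((lst γ).map fun o => ((2 : Fin 3), o)) ++
      ((lst β).map fun o => ((1 : Fin 3), o)) ++
      ((lst α).map fun o => ((0 : Fin 3), o))) = deg β := by
    simp [np, List.countP_map, Function.comp_def, lst_length]
    simp [deg]
  have hG : GG d ψ t (f (t * (j : ℝ) + (1 - t) * (k : ℝ))) j k a 0 0 0 0 =
      scaledAmp d f ψ t j k a := by
    funext y
    simp [GG, scaledAmp, mderiv2_zero, Lm_apply, degA]
  rw [hnp, hG, ← mderiv3_eq] at h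
  refine h.trans ?_
  have hS := symNorm_nonneg hf.2.1 m (deg γ + deg β + deg α) a
  have hP := brP_pos x.2.1
  gcongr
  linarith

end
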